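/- arXiv:1810.12334 — 2 statements merged into one kernel-verified Lean document; each statement's English description precedes it below -/
import Mathlib

section
/- Let a, b be real numbers with b ≠ 0, and let F : ℝ × ℝ³ → ℝ. Assume: (existence of local solutions with arbitrary initial data) for every x₀ ∈ ℝ and every (u₀,u₁,u₂) ∈ ℝ³ there is an open interval I containing x₀ and a solution y on I with y(x₀)=u₀, y'(x₀)=u₁, y''(x₀)=u₂; (invariance of the solution set) whenever y is a solution on an open interval I, then for every c ∈ ℝ the functions x ↦ y(x)+c, x ↦ y(x)+c·e^{ax}·cos(bx) and x ↦ y(x)+c·e^{ax}·sin(bx) are solutions on I, for every c ∈ ℝ the function x ↦ y(x+c) is a solution on I − c, and for every κ ≠ 0 the function x ↦ κ·y(x) is a solution on I. Then F(x, u₀, u₁, u₂) = 2a·u₂ − (a²+b²)·u₁ for all x, u₀, u₁, u₂, i.e. the equation is y''' − 2a y'' + (a²+b²) y' = 0. (This is the complex-eigenvalue case of Remark 4.3, with symmetry algebra ⟨∂_x, y∂_y, ∂_y, e^{ax}cos(bx)∂_y, e^{ax}sin(bx)∂_y⟩.) -/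
/-- `y` is a solution of `y''' = F(x, y, y', y'')` on the set `I`. -/
def IsSolution3 (F : ℝ → ℝ → ℝ → ℝ → ℝ) (y : ℝ → ℝ) (I : Set ℝ) : Prop :=
  (∀ x ∈ I, DifferentiableAt ℝ y x ∧ DifferentiableAt ℝ (deriv y) x ∧
    DifferentiableAt ℝ (deriv^[2] y) x) ∧
  ∀ x ∈ I, deriv^[3] y x = F x (y x) (deriv y x) (deriv^[2] y x)

/-- `I` is an open interval of `ℝ`. -/
def IsOpenInterval (I : Set ℝ) : Prop := IsOpen I ∧ I.OrdConnected

/-!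
Let `L = 2a u₂ - (a² + b²) u₁`. The functions `z = c + e^{ax} (p cos bx + q sin bx)` solve
`z''' = L(z', z'')` and, as `b ≠ 0`, realise every value of `(z, z', z'')` at a given point. Adding
them to a single solution `y` of `y''' = F` shows that `F - L` does not depend on `(u₀, u₁, u₂)`.
Scaling by `κ` multiplies the value of `F - L` along `y` by `κ`, so `κ ≠ 1` forces `F = L`.
-/

section IterateDeriv

variable {𝕜 E : Type*} [NontriviallyNormedField 𝕜] [NormedAddCommGroup E] [NormedSpace 𝕜 E]

theorem iterate_deriv_add_eqOn_of_isOpen {s : Set 𝕜} (hs : IsOpen s) {f g : 𝕜 → E} {n : ℕ}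
    (hf : ∀ k < n, ∀ x ∈ s, DifferentiableAt 𝕜 (deriv^[k] f) x)
    (hg : ∀ k < n, ∀ x ∈ s, DifferentiableAt 𝕜 (deriv^[k] g) x) :
    Set.EqOn (deriv^[n] (f + g)) (deriv^[n] f + deriv^[n] g) s := by
  induction n with
  | zero => exact Set.eqOn_refl _ s
  | succ n ih =>
    intro x hx
    have h_eventually : deriv^[n] (f + g) =ᶠ[nhds x] deriv^[n] f + deriv^[n] g :=
      (ih (fun k hk => hf k (hk.trans n.lt_succ_self))
        (fun k hk => hg k (hk.trans n.lt_succ_self))).eventuallyEq_of_mem (hs.mem_nhds hx)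
    simp only [Function.iterate_succ_apply', Pi.add_apply]
    rw [h_eventually.deriv_eq, deriv_add (hf n n.lt_succ_self x hx) (hg n n.lt_succ_self x hx)]

end IterateDeriv

namespace IsSolution3

variable {F G : ℝ → ℝ → ℝ → ℝ → ℝ} {y z : ℝ → ℝ} {I J : Set ℝ} {x : ℝ}

theorem mono (hy : IsSolution3 F y J) (hIJ : I ⊆ J) : IsSolution3 F y I :=
  ⟨fun x hx => hy.1 x (hIJ hx), fun x hx => hy.2 x (hIJ hx)⟩

theorem differentiableAt_iterate_deriv (hy : IsSolution3 F y I) :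
    ∀ k < 3, ∀ x ∈ I, DifferentiableAt ℝ (deriv^[k] y) x := by
  intro k hk x hx
  obtain ⟨h_zero, h_one, h_two⟩ := hy.1 x hx
  interval_cases k <;> assumption

theorem rhs_add (hI : IsOpen I) (hx : x ∈ I) (hy : IsSolution3 F y I) (hz : IsSolution3 G z I)
    (hyz : IsSolution3 F (y + z) I) :
    F x (y x + z x) (deriv y x + deriv z x) (deriv^[2] y x + deriv^[2] z x) =
      F x (y x) (deriv y x) (deriv^[2] y x) + G x (z x) (deriv z x) (deriv^[2] z x) := by
  have h_deriv (k : ℕ) (hk : k ≤ 3) :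
      deriv^[k] (y + z) x = deriv^[k] y x + deriv^[k] z x :=
    iterate_deriv_add_eqOn_of_isOpen hI
      (fun j hj => hy.differentiableAt_iterate_deriv j (hj.trans_le hk))
      (fun j hj => hz.differentiableAt_iterate_deriv j (hj.trans_le hk)) hx
  have h_one : deriv (y + z) x = deriv y x + deriv z x := h_deriv 1 (by norm_num)
  have h_eq := hyz.2 x hx
  rw [h_deriv 3 le_rfl, h_deriv 2 (by norm_num), h_one, hy.2 x hx, hz.2 x hx] at h_eq
  exact h_eq.symm

theorem rhs_const_mul {κ : ℝ} (hx : x ∈ I) (hy : IsSolution3 F y I)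
    (hκy : IsSolution3 F (fun t => κ * y t) I) :
    F x (κ * y x) (κ * deriv y x) (κ * deriv^[2] y x) =
      κ * F x (y x) (deriv y x) (deriv^[2] y x) := by
  have h_deriv (k : ℕ) : deriv^[k] (fun t => κ * y t) x = κ * deriv^[k] y x := by
    simp only [← iteratedDeriv_eq_iterate, iteratedDeriv_const_mul_field]
  have h_one : deriv (fun t => κ * y t) x = κ * deriv y x := h_deriv 1
  have h_eq := hκy.2 x hx
  rw [h_deriv 3, h_deriv 2, h_one, hy.2 x hx] at h_eq
  exact h_eq.symm

end IsSolution3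

/-- The transformation `T` of functions maps solutions of `y''' = F(x, y, y', y'')` on an open
interval to solutions on the same interval. This encodes the symmetries that fix the independent
variable. -/
def PreservesSolutions (F : ℝ → ℝ → ℝ → ℝ → ℝ) (T : (ℝ → ℝ) → ℝ → ℝ) : Prop :=
  ∀ I : Set ℝ, ∀ y : ℝ → ℝ, IsOpenInterval I → IsSolution3 F y I → IsSolution3 F (T y) I

theorem PreservesSolutions.comp {F : ℝ → ℝ → ℝ → ℝ → ℝ} {S T : (ℝ → ℝ) → ℝ → ℝ}
    (hS : PreservesSolutions F S) (hT : PreservesSolutions F T) :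
    PreservesSolutions F (S ∘ T) :=
  fun I y hI hy => hS I (T y) hI (hT I y hI hy)

/-- The right-hand side of the homogeneous linear equation
`y''' = p₀(x) y + p₁(x) y' + p₂(x) y''`. -/
def linearRHS (p₀ p₁ p₂ : ℝ → ℝ) (x u₀ u₁ u₂ : ℝ) : ℝ :=
  p₀ x * u₀ + p₁ x * u₁ + p₂ x * u₂

theorem eq_linearRHS_of_preservesSolutions {F : ℝ → ℝ → ℝ → ℝ → ℝ} {p₀ p₁ p₂ : ℝ → ℝ} {κ x : ℝ}
    (hκ : κ ≠ 1) (h_scale : PreservesSolutions F fun y t => κ * y t)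
    (h_exists : ∃ I : Set ℝ, ∃ y : ℝ → ℝ, IsOpenInterval I ∧ x ∈ I ∧ IsSolution3 F y I)
    (h_add : ∀ u₀ u₁ u₂ : ℝ, ∃ z : ℝ → ℝ, IsSolution3 (linearRHS p₀ p₁ p₂) z Set.univ ∧
      PreservesSolutions F (fun y => y + z) ∧ z x = u₀ ∧ deriv z x = u₁ ∧ deriv^[2] z x = u₂) :
    F x = linearRHS p₀ p₁ p₂ x := by
  obtain ⟨I, y, hI, hx, hy⟩ := h_exists
  have h_translate (v₀ v₁ v₂ : ℝ) :
      F x (y x + v₀) (deriv y x + v₁) (deriv^[2] y x + v₂) =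
        F x (y x) (deriv y x) (deriv^[2] y x) + linearRHS p₀ p₁ p₂ x v₀ v₁ v₂ := by
    obtain ⟨z, hz, h_preserves, rfl, rfl, rfl⟩ := h_add v₀ v₁ v₂
    exact hy.rhs_add hI.1 hx (hz.mono I.subset_univ) (h_preserves I y hI hy)
  have h_base : F x (y x) (deriv y x) (deriv^[2] y x) =
      linearRHS p₀ p₁ p₂ x (y x) (deriv y x) (deriv^[2] y x) := by
    have h_homogeneous := hy.rhs_const_mul hx (h_scale I y hI hy)
    have h_scaled := h_translate (κ * y x - y x) (κ * deriv y x - deriv y x)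
      (κ * deriv^[2] y x - deriv^[2] y x)
    simp only [add_sub_cancel, h_homogeneous, linearRHS] at h_scaled
    refine mul_left_cancel₀ (sub_ne_zero.mpr hκ) ?_
    simp only [linearRHS]
    linear_combination h_scaled
  funext u₀ u₁ u₂
  have h_shift := h_translate (u₀ - y x) (u₁ - deriv y x) (u₂ - deriv^[2] y x)
  simp only [add_sub_cancel, h_base, linearRHS] at h_shift
  simp only [linearRHS]
  linear_combination h_shift

/-- The function `t ↦ e^{at} (p cos(bt) + q sin(bt))`, the general real exponential mode with
eigenvalues `a ± bi`. -/
noncomputable def dampedOscillation (a b p q t : ℝ) : ℝ :=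
  Real.exp (a * t) * (p * Real.cos (b * t) + q * Real.sin (b * t))

section DampedOscillation

variable (a b p q : ℝ)

theorem hasDerivAt_dampedOscillation (x : ℝ) :
    HasDerivAt (dampedOscillation a b p q)
      (dampedOscillation a b (a * p + b * q) (a * q - b * p) x) x := by
  have ha : HasDerivAt (fun t : ℝ => a * t) a x := by simpa using (hasDerivAt_id x).const_mul a
  have hb : HasDerivAt (fun t : ℝ => b * t) b x := by simpa using (hasDerivAt_id x).const_mul b
  refine (ha.exp.mul ((hb.cos.const_mul p).add (hb.sin.const_mul q))).congr_deriv ?_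
  simp only [dampedOscillation, Pi.add_apply]
  ring

theorem deriv_dampedOscillation :
    deriv (dampedOscillation a b p q) =
      dampedOscillation a b (a * p + b * q) (a * q - b * p) :=
  deriv_eq (hasDerivAt_dampedOscillation a b p q)

theorem deriv_const_add_dampedOscillation (c : ℝ) :
    deriv (fun t => c + dampedOscillation a b p q t) =
      dampedOscillation a b (a * p + b * q) (a * q - b * p) := by
  rw [deriv_const_add', deriv_dampedOscillation]

theorem dampedOscillation_deriv_coeffs (t : ℝ) :
    dampedOscillation a b (a * p + b * q) (a * q - b * p) t =
      a * dampedOscillation a b p q t + b * dampedOscillation a b q (-p) t := by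
  simp only [dampedOscillation]
  ring

theorem isSolution3_const_add_dampedOscillation (c : ℝ) :
    IsSolution3 (linearRHS (fun _ => 0) (fun _ => -(a ^ 2 + b ^ 2)) (fun _ => 2 * a))
      (fun t => c + dampedOscillation a b p q t) Set.univ := by
  have h_diff (p q : ℝ) : Differentiable ℝ (dampedOscillation a b p q) :=
    fun x => (hasDerivAt_dampedOscillation a b p q x).differentiableAt
  simp only [IsSolution3, Function.iterate_succ_apply', Function.iterate_zero_apply,
    deriv_const_add_dampedOscillation, deriv_dampedOscillation]
  refine ⟨fun x _ => ⟨(h_diff _ _ x).const_add c, h_diff _ _ x, h_diff _ _ x⟩, fun x _ => ?_⟩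
  simp only [linearRHS, dampedOscillation]
  ring

theorem exists_dampedOscillation_eq (x P Q : ℝ) :
    ∃ p q : ℝ, dampedOscillation a b p q x = P ∧ dampedOscillation a b q (-p) x = Q := by
  have h_exp : Real.exp (a * x) * Real.exp (-(a * x)) = 1 := by
    rw [← Real.exp_add, add_neg_cancel, Real.exp_zero]
  have h_trig := Real.sin_sq_add_cos_sq (b * x)
  refine ⟨Real.exp (-(a * x)) * (P * Real.cos (b * x) - Q * Real.sin (b * x)),
    Real.exp (-(a * x)) * (P * Real.sin (b * x) + Q * Real.cos (b * x)), ?_, ?_⟩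
  · simp only [dampedOscillation]
    linear_combination P * (Real.sin (b * x) ^ 2 + Real.cos (b * x) ^ 2) * h_exp + P * h_trig
  · simp only [dampedOscillation]
    linear_combination Q * (Real.sin (b * x) ^ 2 + Real.cos (b * x) ^ 2) * h_exp + Q * h_trig

variable {b}

theorem exists_const_add_dampedOscillation_jet_eq (hb : b ≠ 0) (x u₀ u₁ u₂ : ℝ) :
    ∃ c p q : ℝ, c + dampedOscillation a b p q x = u₀ ∧
      deriv (fun t => c + dampedOscillation a b p q t) x = u₁ ∧
      deriv^[2] (fun t => c + dampedOscillation a b p q t) x = u₂ := by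
  have h_norm : a ^ 2 + b ^ 2 ≠ 0 := by positivity
  -- In terms of the values `P`, `Q` below, the derivatives at `x` are `u₁ = a P + b Q` and
  -- `u₂ = (a² - b²) P + 2 a b Q`, a system of determinant `b (a² + b²)`.
  obtain ⟨p, q, hP, hQ⟩ := exists_dampedOscillation_eq a b x
    ((2 * a * u₁ - u₂) / (a ^ 2 + b ^ 2))
    ((a * u₂ - (a ^ 2 - b ^ 2) * u₁) / (b * (a ^ 2 + b ^ 2)))
  refine ⟨u₀ - dampedOscillation a b p q x, p, q, sub_add_cancel _ _, ?_, ?_⟩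
  · rw [deriv_const_add_dampedOscillation, dampedOscillation_deriv_coeffs, hP, hQ]
    field_simp
    ring
  · have h_second : dampedOscillation a b (a * (a * p + b * q) + b * (a * q - b * p))
        (a * (a * q - b * p) - b * (a * p + b * q)) x =
          (a ^ 2 - b ^ 2) * dampedOscillation a b p q x +
            2 * a * b * dampedOscillation a b q (-p) x := by
      simp only [dampedOscillation]
      ring
    rw [Function.iterate_succ_apply', Function.iterate_one, deriv_const_add_dampedOscillation,
      deriv_dampedOscillation, h_second, hP, hQ]
    field_simp
    ring

end DampedOscillation

theorem preservesSolutions_add_const_add_dampedOscillation {F : ℝ → ℝ → ℝ → ℝ → ℝ} {a b : ℝ}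
    (h_const : ∀ c : ℝ, PreservesSolutions F fun y x => y x + c)
    (h_cos : ∀ c : ℝ, PreservesSolutions F fun y x =>
      y x + c * Real.exp (a * x) * Real.cos (b * x))
    (h_sin : ∀ c : ℝ, PreservesSolutions F fun y x =>
      y x + c * Real.exp (a * x) * Real.sin (b * x)) (c p q : ℝ) :
    PreservesSolutions F fun y => y + fun t => c + dampedOscillation a b p q t := by
  convert (h_sin q).comp ((h_cos p).comp (h_const c)) using 2 with y
  funext t
  simp only [Pi.add_apply, Function.comp_apply, dampedOscillation]
  ring

theorem uniqueness_of_invariant_equation_dim5_complex_general {a b κ : ℝ} (hb : b ≠ 0)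
    (hκ : κ ≠ 1) {F : ℝ → ℝ → ℝ → ℝ → ℝ}
    (h_exists : ∀ x : ℝ, ∃ I : Set ℝ, ∃ y : ℝ → ℝ,
      IsOpenInterval I ∧ x ∈ I ∧ IsSolution3 F y I)
    (h_const : ∀ c : ℝ, PreservesSolutions F fun y x => y x + c)
    (h_cos : ∀ c : ℝ, PreservesSolutions F fun y x =>
      y x + c * Real.exp (a * x) * Real.cos (b * x))
    (h_sin : ∀ c : ℝ, PreservesSolutions F fun y x =>
      y x + c * Real.exp (a * x) * Real.sin (b * x))
    (h_scale : PreservesSolutions F fun y x => κ * y x) (x u₀ u₁ u₂ : ℝ) :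
    F x u₀ u₁ u₂ = 2 * a * u₂ - (a ^ 2 + b ^ 2) * u₁ := by
  have h_linear : F x =
      linearRHS (fun _ => 0) (fun _ => -(a ^ 2 + b ^ 2)) (fun _ => 2 * a) x := by
    refine eq_linearRHS_of_preservesSolutions hκ h_scale (h_exists x) fun v₀ v₁ v₂ => ?_
    obtain ⟨c, p, q, h_zero, h_one, h_two⟩ :=
      exists_const_add_dampedOscillation_jet_eq a hb x v₀ v₁ v₂
    exact ⟨fun t => c + dampedOscillation a b p q t,
      isSolution3_const_add_dampedOscillation a b p q c,
      preservesSolutions_add_const_add_dampedOscillation h_const h_cos h_sin c p q,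
      h_zero, h_one, h_two⟩
  rw [h_linear, linearRHS]
  ring

theorem uniqueness_of_invariant_equation_dim5_complex
    (a b : ℝ) (hb : b ≠ 0)
    (F : ℝ → ℝ → ℝ → ℝ → ℝ)
    (hexist : ∀ x₀ u₀ u₁ u₂ : ℝ, ∃ I : Set ℝ, ∃ y : ℝ → ℝ,
      IsOpenInterval I ∧ x₀ ∈ I ∧ IsSolution3 F y I ∧
      y x₀ = u₀ ∧ deriv y x₀ = u₁ ∧ deriv^[2] y x₀ = u₂)
    (hinv : ∀ I : Set ℝ, ∀ y : ℝ → ℝ, IsOpenInterval I → IsSolution3 F y I →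
      (∀ c : ℝ, IsSolution3 F (fun x => y x + c) I) ∧
      (∀ c : ℝ, IsSolution3 F (fun x => y x + c * Real.exp (a * x) * Real.cos (b * x)) I) ∧
      (∀ c : ℝ, IsSolution3 F (fun x => y x + c * Real.exp (a * x) * Real.sin (b * x)) I) ∧
      (∀ c : ℝ, IsSolution3 F (fun x => y (x + c)) {x : ℝ | x + c ∈ I}) ∧
      (∀ κ : ℝ, κ ≠ 0 → IsSolution3 F (fun x => κ * y x) I)) :
    ∀ x u₀ u₁ u₂ : ℝ, F x u₀ u₁ u₂ = 2 * a * u₂ - (a ^ 2 + b ^ 2) * u₁ := by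
  exact uniqueness_of_invariant_equation_dim5_complex_general hb (OfNat.ofNat_ne_one 2)
    (fun x => let ⟨I, y, hI, hx, hy, _⟩ := hexist x 0 0 0; ⟨I, y, hI, hx, hy⟩)
    (fun c I y hI hy => (hinv I y hI hy).1 c) (fun c I y hI hy => (hinv I y hI hy).2.1 c)
    (fun c I y hI hy => (hinv I y hI hy).2.2.1 c)
    (fun I y hI hy => (hinv I y hI hy).2.2.2.2 2 two_ne_zero)
end

section
/- Let λ be a nonzero real number. Let W : ℝ² → ℝ² be a continuously differentiable vector field and define the vector fields X(x,y) = (1,0), V(x,y) = (0,1), and E(x,y) = (0, e^{λx}) on ℝ². Assume [X, W] = 0, [W, V] = −V, and [W, E] = −E. Then there exists β ∈ ℝ such that W(x,y) = (0, y + β) for all (x,y) ∈ ℝ². (This is the determination of the complementary element e₂ = (y+β)∂_y in the proof of Theorem 4.2.) -/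
open VectorField

/-!
The brackets with the constant fields `X = ∂ₓ` and `V = ∂_y` are directional derivatives of `W`, so
the first two relations say that the derivative of `W` is everywhere the map `(u, v) ↦ (0, v)`;
hence `W` is this map plus a constant. Since `E = f • V` with `f` a function of `x`, the Leibniz
rule turns `[W, E] = -E` and `[W, V] = -V` into `W f = 0`, and as `f'` does not vanish this forces
the first component of `W` to be zero.
-/

section NormedSpace

variable {𝕜 F : Type*} [NontriviallyNormedField 𝕜] [NormedAddCommGroup F] [NormedSpace 𝕜 F]

lemma lieBracket_const_left (v : F) (W : F → F) (p : F) :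
    lieBracket 𝕜 (fun _ => v) W p = fderiv 𝕜 W p v := by
  simp [lieBracket]

lemma lieBracket_const_right (W : F → F) (v p : F) :
    lieBracket 𝕜 W (fun _ => v) p = -fderiv 𝕜 W p v := by
  rw [lieBracket_swap, lieBracket_const_left]

lemma fderiv_apply_eq_zero_of_lieBracket_smul_right {f : F → 𝕜} {V W : F → F} {p : F} {c : 𝕜}
    (hf : DifferentiableAt 𝕜 f p) (hV : DifferentiableAt 𝕜 V p) (hVp : V p ≠ 0)
    (hWV : lieBracket 𝕜 W V p = c • V p)
    (hWfV : lieBracket 𝕜 W (fun q => f q • V q) p = c • f p • V p) :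
    fderiv 𝕜 f p (W p) = 0 := by
  have leibniz : lieBracket 𝕜 W (fun q => f q • V q) p =
      fderiv 𝕜 f p (W p) • V p + f p • lieBracket 𝕜 W V p := lieBracket_smul_right hf hV
  rw [hWfV, hWV, smul_comm, right_eq_add] at leibniz
  exact (smul_eq_zero.mp leibniz).resolve_right hVp

lemma fderiv_comp_fst_apply {f : 𝕜 → 𝕜} {p : 𝕜 × F} (hf : DifferentiableAt 𝕜 f p.1)
    (v : 𝕜 × F) : fderiv 𝕜 (fun q : 𝕜 × F => f q.1) p v = deriv f p.1 * v.1 := by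
  have hcomp : HasFDerivAt (fun q : 𝕜 × F => f q.1) (deriv f p.1 • .fst 𝕜 𝕜 F) p :=
    hf.hasDerivAt.comp_hasFDerivAt p hasFDerivAt_fst
  simp [hcomp.fderiv]

end NormedSpace

section Plane

variable {𝕜 : Type*} [NontriviallyNormedField 𝕜] {W : 𝕜 × 𝕜 → 𝕜 × 𝕜}

lemma fderiv_eq_inr_comp_snd_of_lieBracket (hX : lieBracket 𝕜 (fun _ => (1, 0)) W = 0)
    (hV : lieBracket 𝕜 W (fun _ => (0, 1)) = -fun _ => (0, 1)) (p : 𝕜 × 𝕜) :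
    fderiv 𝕜 W p = .inr 𝕜 𝕜 𝕜 ∘L .snd 𝕜 𝕜 𝕜 := by
  have deriv_x : fderiv 𝕜 W p (1, 0) = 0 := by
    rw [← lieBracket_const_left, hX, Pi.zero_apply]
  have deriv_y : fderiv 𝕜 W p (0, 1) = (0, 1) := by
    rw [← neg_inj, ← lieBracket_const_right, hV, Pi.neg_apply]
  ext <;> simp [deriv_x, deriv_y]

lemma fst_eq_zero_of_lieBracket_eq_neg {f : 𝕜 → 𝕜} {p : 𝕜 × 𝕜} (hf : deriv f p.1 ≠ 0)
    (hV : lieBracket 𝕜 W (fun _ => (0, 1)) p = -(0, 1))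
    (hE : lieBracket 𝕜 W (fun q => (0, f q.1)) p = -(0, f p.1)) : (W p).1 = 0 := by
  have hf_diff : DifferentiableAt 𝕜 f p.1 := differentiableAt_of_deriv_ne_zero hf
  have hWf : fderiv 𝕜 (fun q : 𝕜 × 𝕜 => f q.1) p (W p) = 0 :=
    fderiv_apply_eq_zero_of_lieBracket_smul_right (V := fun _ => (0, 1)) (c := -1)
      (hf_diff.comp p differentiableAt_fst) (differentiableAt_const _) (by simp)
      (by simpa using hV) (by simpa using hE)
  rw [fderiv_comp_fst_apply hf_diff] at hWf
  exact (mul_eq_zero.mp hWf).resolve_left hf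

end Plane

section RCLike

variable {𝕜 : Type*} [RCLike 𝕜]

lemma eq_add_of_fderiv_eq_const {F G : Type*} [NormedAddCommGroup F] [NormedSpace 𝕜 F]
    [NormedAddCommGroup G] [NormedSpace 𝕜 G] {g : F → G} {A : F →L[𝕜] G}
    (hg : Differentiable 𝕜 g) (hA : ∀ p, fderiv 𝕜 g p = A) (p : F) : g p = A p + g 0 := by
  have hfderiv (q : F) : fderiv 𝕜 g q = fderiv 𝕜 (fun r => A r + g 0) q := by
    rw [hA, fderiv_add_const, A.fderiv]
  exact congrFun (eq_of_fderiv_eq hg (A.differentiable.add_const _) hfderiv 0 (by simp)) p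

theorem complementary_element_determination_general {W : 𝕜 × 𝕜 → 𝕜 × 𝕜} {f : 𝕜 → 𝕜}
    (hf : ∀ x, deriv f x ≠ 0) (hW : Differentiable 𝕜 W)
    (hX : lieBracket 𝕜 (fun _ => (1, 0)) W = 0)
    (hV : lieBracket 𝕜 W (fun _ => (0, 1)) = -fun _ => (0, 1))
    (hE : lieBracket 𝕜 W (fun p => (0, f p.1)) = -fun p => (0, f p.1)) :
    ∃ β : 𝕜, ∀ p : 𝕜 × 𝕜, W p = (0, p.2 + β) := by
  refine ⟨(W 0).2, fun p => Prod.ext ?_ ?_⟩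
  · exact fst_eq_zero_of_lieBracket_eq_neg (hf p.1) (congrFun hV p) (congrFun hE p)
  · have affine := eq_add_of_fderiv_eq_const hW (fderiv_eq_inr_comp_snd_of_lieBracket hX hV) p
    simpa using congrArg Prod.snd affine

end RCLike

lemma deriv_exp_const_mul_ne_zero {c : ℝ} (hc : c ≠ 0) (x : ℝ) :
    deriv (fun t => Real.exp (c * t)) x ≠ 0 := by
  have hderiv : HasDerivAt (fun t => Real.exp (c * t)) (Real.exp (c * x) * c) x :=
    (hasDerivAt_const_mul c).exp
  rw [hderiv.deriv]
  exact mul_ne_zero (Real.exp_ne_zero _) hc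

theorem complementary_element_determination
    (lam : ℝ) (hlam : lam ≠ 0)
    (W : ℝ × ℝ → ℝ × ℝ) (hW : ContDiff ℝ 1 W)
    (X V E : ℝ × ℝ → ℝ × ℝ)
    (hX : X = fun _ => (1, 0))
    (hV : V = fun _ => (0, 1))
    (hE : E = fun p => (0, Real.exp (lam * p.1)))
    (h1 : lieBracket ℝ X W = 0)
    (h2 : lieBracket ℝ W V = -V)
    (h3 : lieBracket ℝ W E = -E) :
    ∃ β : ℝ, ∀ p : ℝ × ℝ, W p = (0, p.2 + β) := by
  subst hX hV hE
  exact complementary_element_determination_general (deriv_exp_const_mul_ne_zero hlam)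
    (hW.differentiable one_ne_zero) h1 h2 h3
end
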